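/- Lemma on a-left representations in the hexagonal Coxeter group: let g, g' ∈ G with a-left representations w = u₁a₁…u_p a_p u_{p+1}a_{p+1}…u_{p+m}a_{p+m}u_{p+m+1} and w' = u₁a₁…u_p a_p u'_{p+1}a'_{p+1}…u'_{p+n}a'_{p+n}u'_{p+n+1} where u_{p+1}a_{p+1} ≠ u'_{p+1}a'_{p+1}. Then the A-letters a_{p+1},…,a_{p+m}, a'_{p+1},…,a'_{p+n} are exactly the A-letters that survive when the word w⁻¹w' is fully reduced (i.e., the number of A-letters in any geodesic representative of g⁻¹g' is m + n). -/

import Mathlib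

/-- Generators of the hexagonal hyperbolic Coxeter group: (false, i) is aᵢ₊₁ and
(true, i) is bᵢ₊₁. -/
abbrev HexGen : Type := Bool × Fin 3

/-- Relators: each generator squares to the identity, and a_k commutes with b_l for k ≠ l. -/
def hexRels : Set (FreeGroup HexGen) :=
  {r | (∃ x : HexGen, r = FreeGroup.of x * FreeGroup.of x) ∨
       (∃ k l : Fin 3, k ≠ l ∧
          r = FreeGroup.of (false, k) * FreeGroup.of (true, l) *
              (FreeGroup.of (false, k))⁻¹ * (FreeGroup.of (true, l))⁻¹)}

/-- The hexagonal hyperbolic Coxeter group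
G = ⟨a₁,a₂,a₃,b₁,b₂,b₃ | aᵢ² = bᵢ² = e, [a_k,b_l] = e for k ≠ l⟩. -/
abbrev Hex : Type := PresentedGroup hexRels

/-- Evaluation of a word in the generators in the group. -/
def evalWord (w : List HexGen) : Hex :=
  (w.map (fun x => (PresentedGroup.of x : Hex))).prod

/-- Word metric on Hex with respect to the generating set S = {a₁,a₂,a₃,b₁,b₂,b₃}
(each generator is its own inverse). -/
noncomputable def wordDist (g h : Hex) : ℕ :=
  sInf {n : ℕ | ∃ w : List HexGen, w.length = n ∧ evalWord w = g⁻¹ * h}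

/-- w is a geodesic word representing g. -/
def IsGeodesicWord (g : Hex) (w : List HexGen) : Prop :=
  evalWord w = g ∧ ∀ w' : List HexGen, evalWord w' = g → w.length ≤ w'.length

/-- All A-letters are commuted as far left as possible: no adjacent pair b_l a_k with
k ≠ l occurs. -/
def IsALeft (w : List HexGen) : Prop :=
  ∀ (s : ℕ) (k l : Fin 3), k ≠ l →
    ¬(w[s]? = some (true, l) ∧ w[s + 1]? = some (false, k))

/-- All B-letters are commuted as far left as possible. -/
def IsBLeft (w : List HexGen) : Prop :=
  ∀ (s : ℕ) (k l : Fin 3), k ≠ l →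
    ¬(w[s]? = some (false, k) ∧ w[s + 1]? = some (true, l))

/-- Cut a word into blocks, each ending with a letter of type p (p = false : after each
A-letter; p = true : after each B-letter); a trailing block with no such letter is
discarded. -/
def cutAux (p : Bool) : List HexGen → List HexGen → List (List HexGen)
  | _, [] => []
  | cur, x :: xs =>
      if x.1 = p then (cur ++ [x]) :: cutAux p [] xs else cutAux p (cur ++ [x]) xs

/-- Length of the longest common prefix of two lists. -/
def lcpLen {A : Type*} [DecidableEq A] : List A → List A → ℕ
  | a :: as, b :: bs => if a = b then lcpLen as bs + 1 else 0
  | _, _ => 0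

/-- The rooted-tree (sentence-tree) metric on finite sequences. -/
def treeDist {A : Type*} [DecidableEq A] (u v : List A) : ℕ :=
  u.length + v.length - 2 * lcpLen u v

/-- `y` is a B-letter past which the A-letter `x` can be commuted. -/
def Passes (x y : HexGen) : Prop := x.1 = false ∧ y.1 = true ∧ x.2 ≠ y.2

instance (x y : HexGen) : Decidable (Passes x y) := inferInstanceAs (Decidable (_ ∧ _ ∧ _))

/-- The letter `x` may follow the letter `y` in an a-left normal form. -/
def MayFollow (x y : HexGen) : Prop := x ≠ y ∧ ¬ Passes x y

/-- Right multiplication by a generator on reversed a-left normal forms. -/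
def step (x : HexGen) : List HexGen → List HexGen
  | [] => [x]
  | y :: w => if x = y then w else if Passes x y then y :: step x w else x :: y :: w

/-- Right multiplication by a word on reversed a-left normal forms. -/
def run (v s : List HexGen) : List HexGen := v.foldl (fun s x => step x s) s

theorem step_of_isChain {x : HexGen} {s : List HexGen} (h : (x :: s).IsChain MayFollow) :
    step x s = x :: s := by
  cases s with
  | nil => rfl
  | cons y w =>
    rw [List.isChain_cons_cons] at h
    simp [step, h.1.1, h.1.2]

theorem Passes.ne {x y : HexGen} (h : Passes x y) : x ≠ y := by
  rintro rfl
  exact h.2.2 rfl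

theorem step_append {x : HexGen} {c : List HexGen} (r : List HexGen) (hc : ∀ y ∈ c, Passes x y) :
    step x (c ++ r) = c ++ step x r := by
  induction c with
  | nil => rfl
  | cons y c ih =>
    have hy : Passes x y := hc y (by simp)
    simp [step, hy.ne, hy, ih fun z hz => hc z (by simp [hz])]

theorem step_cons_self (x : HexGen) (r : List HexGen) : step x (x :: r) = r := by
  simp [step]

theorem exists_step_eq {s : List HexGen} (x : HexGen) (hs : s.IsChain MayFollow) :
    ∃ c r, (∀ y ∈ c, Passes x y) ∧ (x :: r).IsChain MayFollow ∧
      ((s = c ++ r ∧ step x s = c ++ x :: r) ∨ (s = c ++ x :: r ∧ step x s = c ++ r)) := by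
  induction s with
  | nil => exact ⟨[], [], by simp, by simp, Or.inl ⟨rfl, rfl⟩⟩
  | cons y w ih =>
    by_cases hxy : x = y
    · subst hxy
      exact ⟨[], w, by simp, hs, Or.inr ⟨rfl, step_cons_self x w⟩⟩
    by_cases hp : Passes x y
    · obtain ⟨c, r, hc, hr, h⟩ := ih hs.tail
      refine ⟨y :: c, r, ?_, hr, ?_⟩
      · exact List.forall_mem_cons.2 ⟨hp, hc⟩
      · simpa [step, hxy, hp] using h
    · have h : (x :: y :: w).IsChain MayFollow := List.isChain_cons_cons.2 ⟨⟨hxy, hp⟩, hs⟩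
      exact ⟨[], y :: w, by simp, h, Or.inl ⟨rfl, step_of_isChain h⟩⟩

theorem step_step {s : List HexGen} (x : HexGen) (hs : s.IsChain MayFollow) :
    step x (step x s) = s := by
  obtain ⟨c, r, hc, hr, ⟨h₁, h₂⟩ | ⟨h₁, h₂⟩⟩ := exists_step_eq x hs
  · rw [h₂, step_append _ hc, step_cons_self, h₁]
  · rw [h₂, step_append _ hc, step_of_isChain hr, h₁]

theorem isChain_step {s : List HexGen} (x : HexGen) (hs : s.IsChain MayFollow) :
    (step x s).IsChain MayFollow := by
  obtain ⟨c, r, hc, hr, ⟨h₁, h₂⟩ | ⟨h₁, h₂⟩⟩ := exists_step_eq x hs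
  · rw [h₂]
    rw [h₁, List.isChain_append] at hs
    refine List.isChain_append.2 ⟨hs.1, hr, fun y hy z hz => ?_⟩
    have hp := hc y (List.mem_of_getLast? hy)
    obtain rfl : x = z := by simpa using hz
    exact ⟨hp.ne.symm, fun h => absurd (h.1.symm.trans hp.2.1) (by simp)⟩
  · rw [h₂]
    rw [h₁, List.isChain_append] at hs
    refine List.isChain_append.2 ⟨hs.1, hr.tail, fun y hy z hz => ?_⟩
    have hp := hc y (List.mem_of_getLast? hy)
    have hxz : MayFollow x z := by
      cases r with
      | nil => simp at hz
      | cons t r =>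
        obtain rfl : t = z := by simpa using hz
        exact (List.isChain_cons_cons.1 hr).1
    refine ⟨?_, fun h => absurd (h.1.symm.trans hp.2.1) (by simp)⟩
    rintro rfl
    exact hxz.2 hp

theorem step_comm {s : List HexGen} {x y : HexGen} (hxy : Passes x y)
    (hs : s.IsChain MayFollow) : step y (step x s) = step x (step y s) := by
  have hy : ∀ z, ¬ Passes y z := fun z h => absurd (h.1.symm.trans hxy.2.1) (by simp)
  cases s with
  | nil => simp [step, hxy, hxy.ne, hxy.ne.symm, hy]
  | cons z w =>
    by_cases hyz : y = z
    · subst hyz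
      simp [step, hxy, hxy.ne]
    by_cases hxz : x = z
    · subst hxz
      cases w with
      | nil => simp [step, hxy, hxy.ne, hyz, hy]
      | cons t w =>
        have ht : y ≠ t := by
          rintro rfl
          exact (List.isChain_cons_cons.1 hs).1.2 hxy
        simp [step, hxy, hxy.ne, hyz, hy, ht]
    by_cases hp : Passes x z
    · simp [step, hxy, hxy.ne, hyz, hy, hxz, hp]
    · simp [step, hxy, hxy.ne, hxy.ne.symm, hyz, hy, hxz, hp]

/-- Reversed a-left normal forms. -/
abbrev NormalWord : Type := {s : List HexGen // s.IsChain MayFollow}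

/-- The permutation of normal forms given by right multiplication by a generator. -/
def stepPerm (x : HexGen) : Equiv.Perm NormalWord where
  toFun s := ⟨step x s.1, isChain_step x s.2⟩
  invFun s := ⟨step x s.1, isChain_step x s.2⟩
  left_inv s := Subtype.ext (step_step x s.2)
  right_inv s := Subtype.ext (step_step x s.2)

theorem lift_stepPerm_eq_one (r : FreeGroup HexGen) (hr : r ∈ hexRels) :
    FreeGroup.lift stepPerm r = 1 := by
  rcases hr with ⟨x, rfl⟩ | ⟨k, l, hkl, rfl⟩
  · ext1 s
    simpa using Subtype.ext (step_step x s.2)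
  · have h : stepPerm (false, k) * stepPerm (true, l) = stepPerm (true, l) * stepPerm (false, k) :=
      Equiv.ext fun s => Subtype.ext (step_comm ⟨rfl, rfl, hkl⟩ s.2).symm
    simp [h]

/-- The action of the group on normal forms, by right multiplication by the inverse. -/
def hexAction : Hex →* Equiv.Perm NormalWord :=
  PresentedGroup.toGroup lift_stepPerm_eq_one

theorem hexAction_of (x : HexGen) : hexAction (PresentedGroup.of x) = stepPerm x :=
  PresentedGroup.toGroup.of _

theorem evalWord_nil : evalWord [] = 1 := rfl

theorem evalWord_cons (x : HexGen) (w : List HexGen) :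
    evalWord (x :: w) = PresentedGroup.of x * evalWord w := by
  simp [evalWord]

theorem evalWord_append (v w : List HexGen) : evalWord (v ++ w) = evalWord v * evalWord w := by
  simp [evalWord]

theorem of_mul_self (x : HexGen) : (PresentedGroup.of x * PresentedGroup.of x : Hex) = 1 :=
  PresentedGroup.one_of_mem (rels := hexRels) (x := FreeGroup.of x * FreeGroup.of x)
    (Or.inl ⟨x, rfl⟩)

theorem commute_of_passes {x y : HexGen} (h : Passes x y) :
    Commute (PresentedGroup.of x : Hex) (PresentedGroup.of y) := by
  obtain ⟨i, k⟩ := x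
  obtain ⟨j, l⟩ := y
  obtain ⟨rfl, rfl, hkl⟩ := h
  have := PresentedGroup.one_of_mem (rels := hexRels) (Or.inr ⟨k, l, hkl, rfl⟩)
  exact commutatorElement_eq_one_iff_commute.1 this

theorem run_eq_hexAction (v : List HexGen) (s : NormalWord) :
    run v s.1 = (hexAction (evalWord v)⁻¹ s).1 := by
  induction v generalizing s with
  | nil => simp [run, evalWord_nil]
  | cons x v ih =>
    have := ih (stepPerm x s)
    rw [evalWord_cons, mul_inv_rev, map_mul, Equiv.Perm.mul_apply,
      inv_eq_of_mul_eq_one_left (of_mul_self x), hexAction_of]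
    exact this

theorem isChain_run (v : List HexGen) {s : List HexGen} (hs : s.IsChain MayFollow) :
    (run v s).IsChain MayFollow := by
  rw [run_eq_hexAction v ⟨s, hs⟩]
  exact Subtype.prop _

theorem run_congr {v v' s : List HexGen} (h : evalWord v = evalWord v')
    (hs : s.IsChain MayFollow) : run v s = run v' s := by
  rw [run_eq_hexAction v ⟨s, hs⟩, run_eq_hexAction v' ⟨s, hs⟩, h]

theorem run_append (v w s : List HexGen) : run (v ++ w) s = run w (run v s) := by
  simp [run]

theorem run_nil_of_isChain_reverse {w : List HexGen} (hw : w.reverse.IsChain MayFollow) :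
    run w [] = w.reverse := by
  induction w using List.reverseRecOn with
  | nil => rfl
  | append_singleton w x ih =>
    rw [List.reverse_append, List.reverse_singleton, List.singleton_append] at hw ⊢
    rw [run_append, ih hw.tail]
    exact step_of_isChain hw

/-- The value of a reversed word. -/
def evalRev (s : List HexGen) : Hex := evalWord s.reverse

theorem evalRev_append (s t : List HexGen) : evalRev (s ++ t) = evalRev t * evalRev s := by
  simp [evalRev, evalWord_append]

theorem evalRev_cons (x : HexGen) (t : List HexGen) :
    evalRev (x :: t) = evalRev t * PresentedGroup.of x := by
  simp [evalRev, evalWord_append, evalWord_cons, evalWord_nil]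

theorem commute_evalRev {x : HexGen} {c : List HexGen} (hc : ∀ y ∈ c, Passes x y) :
    Commute (PresentedGroup.of x : Hex) (evalRev c) := by
  induction c with
  | nil => exact Commute.one_right _
  | cons y c ih =>
    rw [evalRev_cons]
    exact (ih fun z hz => hc z (by simp [hz])).mul_right (commute_of_passes (hc y (by simp)))

theorem evalRev_step {s : List HexGen} (x : HexGen) (hs : s.IsChain MayFollow) :
    evalRev (step x s) = evalRev s * PresentedGroup.of x := by
  obtain ⟨c, r, hc, hr, ⟨h₁, h₂⟩ | ⟨h₁, h₂⟩⟩ := exists_step_eq x hs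
  · rw [h₂, h₁, evalRev_append, evalRev_append, evalRev_cons, mul_assoc, mul_assoc,
      (commute_evalRev hc).eq]
  · rw [h₂, h₁, evalRev_append, evalRev_append, evalRev_cons, mul_assoc, mul_assoc,
      ← (commute_evalRev hc).eq, ← mul_assoc (PresentedGroup.of x), of_mul_self, one_mul]

theorem evalRev_run (v : List HexGen) {s : List HexGen} (hs : s.IsChain MayFollow) :
    evalRev (run v s) = evalRev s * evalWord v := by
  induction v generalizing s with
  | nil => simp [run, evalWord_nil]
  | cons x v ih =>
    rw [evalWord_cons, ← mul_assoc, ← evalRev_step x hs]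
    exact ih (isChain_step x hs)

theorem IsGeodesicWord.not_commute {g : Hex} {v v₁ u v₂ : List HexGen} {x : HexGen}
    (hv : IsGeodesicWord g v) (h : v = v₁ ++ x :: u ++ x :: v₂) :
    ¬ Commute (PresentedGroup.of x : Hex) (evalWord u) := by
  intro hc
  have h₁ := hv.2 (v₁ ++ u ++ v₂) (by
    rw [← hv.1, h]
    simp only [evalWord_append, evalWord_cons, hc.eq, mul_assoc]
    rw [← mul_assoc (PresentedGroup.of x) (PresentedGroup.of x), of_mul_self, one_mul])
  simp [h] at h₁

theorem IsGeodesicWord.isChain_reverse {g : Hex} {w : List HexGen}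
    (hw : IsGeodesicWord g w) (hl : IsALeft w) : w.reverse.IsChain MayFollow := by
  rw [List.isChain_reverse, List.isChain_iff_getElem]
  intro i hi
  refine ⟨fun h => ?_, fun h => ?_⟩
  · refine hw.not_commute (v₁ := w.take i) (u := []) (x := w[i]) (v₂ := w.drop (i + 2)) ?_
      (Commute.one_right _)
    nth_rw 1 [← List.take_append_drop i w]
    rw [List.drop_eq_getElem_cons (by omega), List.drop_eq_getElem_cons hi, h]
    simp only [List.append_assoc, List.cons_append, List.nil_append]
  · refine hl i w[i + 1].2 w[i].2 h.2.2 ⟨?_, ?_⟩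
    · rw [List.getElem?_eq_getElem (by omega)]
      exact congrArg some (Prod.ext h.2.1 rfl)
    · rw [List.getElem?_eq_getElem hi]
      exact congrArg some (Prod.ext h.1 rfl)

/-- The blocks of a reversed word, each ending with an A-letter. -/
def blocks (s : List HexGen) : List (List HexGen) := cutAux false [] s.reverse

theorem cutAux_append_of_forall {p : Bool} (cur l : List HexGen) {c : List HexGen}
    (hc : ∀ y ∈ c, y.1 ≠ p) : cutAux p cur (l ++ c) = cutAux p cur l := by
  induction l generalizing cur with
  | nil =>
    induction c generalizing cur with
    | nil => rfl
    | cons y c ih =>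
      rw [List.nil_append, cutAux.eq_2, if_neg (hc y (by simp))]
      exact ih (fun z hz => hc z (by simp [hz])) _
  | cons x l ih => simp [cutAux, ih]

theorem exists_cutAux_append_singleton {p : Bool} (cur l : List HexGen) {x : HexGen}
    (hx : x.1 = p) : ∃ b, cutAux p cur (l ++ [x]) = cutAux p cur l ++ [b] := by
  induction l generalizing cur with
  | nil => exact ⟨cur ++ [x], by simp [cutAux, hx]⟩
  | cons y l ih =>
    rw [List.cons_append, cutAux, cutAux]
    split_ifs
    · obtain ⟨b, hb⟩ := ih []
      exact ⟨b, by rw [hb, List.cons_append]⟩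
    · exact ih _

theorem flatten_cutAux_append_singleton {p : Bool} (cur l : List HexGen) {x : HexGen}
    (hx : x.1 = p) : (cutAux p cur (l ++ [x])).flatten = cur ++ (l ++ [x]) := by
  induction l generalizing cur with
  | nil => simp [cutAux, hx]
  | cons y l ih =>
    rw [List.cons_append, cutAux]
    split_ifs <;> simp [ih]

theorem blocks_append_of_forall {c : List HexGen} (s : List HexGen) (hc : ∀ y ∈ c, y.1 = true) :
    blocks (c ++ s) = blocks s := by
  rw [blocks, List.reverse_append]
  exact cutAux_append_of_forall _ _ (by simpa using hc)

theorem exists_blocks_cons (s : List HexGen) {x : HexGen} (hx : x.1 = false) :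
    ∃ b, blocks (x :: s) = blocks s ++ [b] := by
  rw [blocks, List.reverse_cons]
  exact exists_cutAux_append_singleton _ _ hx

theorem blocks_cons_injective {x y : HexGen} {s t : List HexGen} (hx : x.1 = false)
    (hy : y.1 = false) (h : blocks (x :: s) = blocks (y :: t)) : x :: s = y :: t := by
  have := congrArg List.flatten h
  rw [blocks, blocks, List.reverse_cons, List.reverse_cons,
    flatten_cutAux_append_singleton _ _ hx, flatten_cutAux_append_singleton _ _ hy,
    List.nil_append, List.nil_append, ← List.reverse_cons, ← List.reverse_cons] at this
  exact List.reverse_injective this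

theorem blocks_step_of_fst_eq_true {x : HexGen} (hx : x.1 = true) (s : List HexGen) :
    blocks (step x s) = blocks s := by
  have hp : ∀ y, ¬ Passes x y := fun y h => absurd (h.1.symm.trans hx) (by simp)
  have hb : ∀ t, blocks (x :: t) = blocks t := fun t =>
    blocks_append_of_forall (c := [x]) t (by simpa using hx)
  cases s with
  | nil => exact hb []
  | cons y w =>
    by_cases hxy : x = y
    · subst hxy
      rw [step_cons_self, hb]
    · simp [step, hxy, hp, hb]

/-- Multiplication by an A-letter `x` crosses an edge of the sentence tree, given by `x :: r`. -/
theorem exists_blocks_step {s : List HexGen} (x : HexGen)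
    (hs : s.IsChain MayFollow) :
    ∃ r, Commute (PresentedGroup.of x : Hex) ((evalRev r)⁻¹ * evalRev s) ∧
      ((blocks s = blocks r ∧ blocks (step x s) = blocks (x :: r)) ∨
        (blocks s = blocks (x :: r) ∧ blocks (step x s) = blocks r)) := by
  obtain ⟨c, r, hc, hr, h⟩ := exists_step_eq x hs
  refine ⟨r, ?_, ?_⟩
  · rcases h with ⟨h, -⟩ | ⟨h, -⟩
    · rw [h, evalRev_append, inv_mul_cancel_left]
      exact commute_evalRev hc
    · rw [h, evalRev_append, evalRev_cons, mul_assoc, inv_mul_cancel_left]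
      exact (Commute.refl _).mul_right (commute_evalRev hc)
  · have hc' : ∀ y ∈ c, y.1 = true := fun y hy => (hc y hy).2.1
    rcases h with ⟨h₁, h₂⟩ | ⟨h₁, h₂⟩
    · exact Or.inl ⟨by rw [h₁, blocks_append_of_forall _ hc'],
        by rw [h₂, blocks_append_of_forall _ hc']⟩
    · exact Or.inr ⟨by rw [h₁, blocks_append_of_forall _ hc'],
        by rw [h₂, blocks_append_of_forall _ hc']⟩

/-- The number of A-letters of a word. -/
def countA (v : List HexGen) : ℕ := (v.filter (fun x => !x.1)).length

theorem countA_append_singleton_of_false (v : List HexGen) {x : HexGen} (hx : x.1 = false) :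
    countA (v ++ [x]) = countA v + 1 := by
  simp [countA, hx]

theorem countA_append_singleton_of_true (v : List HexGen) {x : HexGen} (hx : x.1 = true) :
    countA (v ++ [x]) = countA v := by
  simp [countA, hx]

/-- A non-backtracking path of length `n` in the sentence tree from `S` to `T` whose last step
crosses the edge from `blocks r` to `blocks (x :: r)`, in one of the two directions. -/
def PathEndsWith (S T : List (List HexGen)) (n : ℕ) (x : HexGen) (r : List HexGen) : Prop :=
  (T = blocks r ∧ ∃ X, S = blocks (x :: r) ++ X ∧ X.length + 1 = n) ∨
    (T = blocks (x :: r) ∧ ∃ P X y Y, S = P ++ X ∧ T = P ++ y :: Y ∧ X.head? ≠ some y ∧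
      X.length + Y.length + 1 = n)

theorem path_of_geodesic {g : Hex} {v v₂ s : List HexGen} (hs : s.IsChain MayFollow)
    (hv : IsGeodesicWord g (v ++ v₂)) :
    (blocks (run v s) = blocks s ∧ countA v = 0) ∨
      ∃ v₁ x u r, v = v₁ ++ x :: u ∧ x.1 = false ∧
        Commute (PresentedGroup.of x : Hex) ((evalRev r)⁻¹ * evalRev (run v₁ s)) ∧
        PathEndsWith (blocks s) (blocks (run v s)) (countA v) x r := by
  induction v using List.reverseRecOn generalizing v₂ with
  | nil => exact Or.inl ⟨rfl, rfl⟩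
  | append_singleton v z ih =>
    rw [List.append_assoc] at hv
    specialize ih hv
    have hrun : run (v ++ [z]) s = step z (run v s) := run_append v [z] s
    cases hz : z.1 with
    | true =>
      rw [hrun, blocks_step_of_fst_eq_true hz, countA_append_singleton_of_true v hz]
      refine ih.imp_right ?_
      rintro ⟨v₁, x, u, r, h₁, h⟩
      exact ⟨v₁, x, u ++ [z], r, by simp [h₁], h⟩
    | false =>
      right
      rw [hrun, countA_append_singleton_of_false v hz]
      obtain ⟨t, ht, hcross⟩ := exists_blocks_step z (isChain_run v hs)
      refine ⟨v, z, [], t, rfl, hz, ht, ?_⟩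
      obtain ⟨b, hb⟩ := exists_blocks_cons t hz
      rcases ih with ⟨h₁, h₂⟩ | ⟨v₁, x, u, r, h₁, hx, h₂, h₃⟩
      · rcases hcross with ⟨h₃, h₄⟩ | ⟨h₃, h₄⟩
        · exact Or.inr ⟨h₄, blocks s, [], b, [], by simp, by rw [h₄, hb, ← h₃, h₁], by simp,
            by simp [h₂]⟩
        · exact Or.inl ⟨h₄, [], by simp [← h₁, h₃], by simp [h₂]⟩
      · have hne : x :: r ≠ z :: t := by
          intro he
          obtain ⟨rfl, rfl⟩ := List.cons.inj he
          refine hv.not_commute (v₁ := v₁) (u := u) (x := x) (v₂ := v₂) (by simp [h₁]) ?_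
          have h₄ : evalRev (run v s)
              = evalRev (run v₁ s) * (PresentedGroup.of x * evalWord u) := by
            rw [h₁, run_append, evalRev_run _ (isChain_run _ hs), evalWord_cons]
          have h₅ : evalWord u = (PresentedGroup.of x)⁻¹ *
              (((evalRev r)⁻¹ * evalRev (run v₁ s))⁻¹ * ((evalRev r)⁻¹ * evalRev (run v s))) := by
            rw [h₄]
            group
          rw [h₅]
          exact (Commute.refl _).inv_right.mul_right (h₂.inv_right.mul_right ht)
        have hne' : blocks (x :: r) ≠ blocks (z :: t) := fun h =>
          hne (blocks_cons_injective hx hz h)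
        rcases h₃ with ⟨h₃, X, h₄, h₅⟩ | ⟨h₃, P, X, y, Y, h₄, h₅, h₆, h₇⟩ <;>
          rcases hcross with ⟨h₈, h₉⟩ | ⟨h₈, h₉⟩
        · obtain ⟨a, ha⟩ := exists_blocks_cons r hx
          refine Or.inr ⟨h₉, blocks t, a :: X, b, [], ?_, by rw [h₉, hb], ?_, by simp [← h₅]⟩
          · rw [h₄, ha, ← h₃, h₈]
            simp
          · rw [List.head?_cons]
            intro h
            apply hne'
            rw [ha, hb, ← h₃, h₈, Option.some.inj h]
        · refine Or.inl ⟨h₉, (blocks (x :: r)).drop (blocks r).length ++ X, ?_, ?_⟩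
          · obtain ⟨a, ha⟩ := exists_blocks_cons r hx
            rw [h₄, ← h₈, h₃, ha]
            simp
          · obtain ⟨a, ha⟩ := exists_blocks_cons r hx
            rw [ha, ← h₅]
            simp
        · refine Or.inr ⟨h₉, P, X, y, Y ++ [b], h₄, ?_, h₆, ?_⟩
          · rw [h₉, hb, ← h₈, h₅]
            simp
          · simp [← h₇]; omega
        · exact absurd (h₃.symm.trans h₈) hne'

theorem lcpLen_append {A : Type*} [DecidableEq A] (P X Y : List A) :
    lcpLen (P ++ X) (P ++ Y) = P.length + lcpLen X Y := by
  induction P with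
  | nil => simp
  | cons a P ih => simp [lcpLen, ih]; omega

theorem treeDist_append {A : Type*} [DecidableEq A] (P : List A) {X Y : List A}
    (h : lcpLen X Y = 0) : treeDist (P ++ X) (P ++ Y) = X.length + Y.length := by
  rw [treeDist, lcpLen_append, h, List.length_append, List.length_append]
  omega

theorem lcpLen_nil_right {A : Type*} [DecidableEq A] (X : List A) : lcpLen X [] = 0 := by
  cases X <;> rfl

theorem lcpLen_cons_of_head?_ne {A : Type*} [DecidableEq A] {X Y : List A} {y : A}
    (h : X.head? ≠ some y) : lcpLen X (y :: Y) = 0 := by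
  cases X with
  | nil => rfl
  | cons x X => simpa [lcpLen] using h

theorem countA_eq_treeDist {g : Hex} {v s : List HexGen} (hs : s.IsChain MayFollow)
    (hv : IsGeodesicWord g v) : countA v = treeDist (blocks s) (blocks (run v s)) := by
  rcases path_of_geodesic (v₂ := []) hs (by simpa using hv) with
    ⟨h₁, h₂⟩ | ⟨v₁, x, u, r, -, hx, -, ⟨h₁, X, h₂, h₃⟩ | ⟨-, P, X, y, Y, h₁, h₂, h₃, h₄⟩⟩
  · have := treeDist_append (blocks s) (lcpLen_nil_right ([] : List (List HexGen)))
    rw [h₁, h₂]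
    simpa using this.symm
  · obtain ⟨b, hb⟩ := exists_blocks_cons r hx
    have := treeDist_append (blocks r) (lcpLen_nil_right (b :: X))
    rw [h₁, h₂, hb, ← h₃]
    simpa using this.symm
  · rw [h₁, h₂, treeDist_append P (lcpLen_cons_of_head?_ne h₃), ← h₄, List.length_cons, add_assoc]

/-- for a-left representations wa, wa' of g, g', the A-letters past the
divergence point of the two representations are exactly the A-letters surviving in a
reduced word for g⁻¹g': the number of A-letters in any geodesic representative v of g⁻¹g'
equals m + n, the sentence-tree distance between the cut sentences. -/
theorem stmt_16 (g g' : Hex) (wa wa' : List HexGen)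
    (hga : IsGeodesicWord g wa) (hal : IsALeft wa)
    (hga' : IsGeodesicWord g' wa') (hal' : IsALeft wa')
    (v : List HexGen) (hv : IsGeodesicWord (g⁻¹ * g') v) :
    (v.filter (fun x => !x.1)).length
      = treeDist (cutAux false [] wa) (cutAux false [] wa') := by
  have hs := hga.isChain_reverse hal
  have hs' := hga'.isChain_reverse hal'
  have h : run v wa.reverse = wa'.reverse := by
    rw [← run_nil_of_isChain_reverse hs, ← run_nil_of_isChain_reverse hs', ← run_append]
    refine run_congr ?_ List.isChain_nil
    rw [evalWord_append, hga.1, hv.1, hga'.1, mul_inv_cancel_left]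
  have := countA_eq_treeDist hs hv
  rwa [h, blocks, blocks, List.reverse_reverse, List.reverse_reverse] at this
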